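/- arXiv:2409.13553 — 2 statements merged into one kernel-verified Lean document; each statement's English description precedes it below -/
import Mathlib

section
/- Let F be an infinite field, let u > r ≥ 2 be integers and let 1 ≤ k ≤ r−1. Define the partition P of 2u−r by: P = ([u]^k, 1^{u−r}) if 2k ≤ r, and P = ([u+r−2k]^{r−k}, 1^{u+2k−2r}) if 2k > r. Then there exists a nonempty subset U of X^Q_{k,u−r}, open in the Zariski subspace topology of X^Q_{k,u−r} ⊆ F^N, such that for every x ∈ U the Jordan type of M_x equals P. -/
open Polynomial

noncomputable section

/-- The quotient module `F[t]/(t^m)`. -/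
abbrev PQ (F : Type*) [Field F] (m : ℕ) : Type _ := F[X] ⧸ Ideal.span {(X : F[X]) ^ m}

variable (F : Type*) [Field F]

lemma mulQ_cond (m m' : ℕ) (c : F[X]) (h : (X : F[X]) ^ m' ∣ c * X ^ m) :
    Ideal.span {(X : F[X]) ^ m} ≤
      Submodule.comap (LinearMap.mulLeft F[X] c) (Ideal.span {(X : F[X]) ^ m'}) := by
  rw [Ideal.span_le]
  intro x hx
  rw [Set.mem_singleton_iff] at hx
  subst hx
  simp only [SetLike.mem_coe, Submodule.mem_comap, LinearMap.mulLeft_apply]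
  exact Ideal.mem_span_singleton.mpr h

/-- The `F`-linear map `F[t]/(t^m) → F[t]/(t^{m'})` induced by multiplication by the
polynomial `c`, well-defined whenever `t^{m'} ∣ c · t^m`. -/
def mulQ (m m' : ℕ) (c : F[X]) (h : (X : F[X]) ^ m' ∣ c * X ^ m) :
    PQ F m →ₗ[F] PQ F m' :=
  LinearMap.restrictScalars F
    (Submodule.mapQ (Ideal.span {(X : F[X]) ^ m}) (Ideal.span {(X : F[X]) ^ m'})
      (LinearMap.mulLeft F[X] c) (mulQ_cond F m m' c h))

lemma dvd_A (u : ℕ) (c : F[X]) : (X : F[X]) ^ u ∣ c * X ^ u := Dvd.intro c (mul_comm _ _)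

lemma dvd_G (u r : ℕ) (hru : r ≤ u) (g : F[X]) :
    (X : F[X]) ^ u ∣ (X ^ r * g) * X ^ (u - r) := by
  refine Dvd.intro g ?_
  rw [mul_comm ((X:F[X])^r) g, mul_assoc, ← pow_add, Nat.add_sub_cancel' hru, mul_comm]

lemma dvd_H (u r : ℕ) (h : F[X]) : (X : F[X]) ^ (u - r) ∣ h * X ^ u :=
  Dvd.dvd.mul_left (pow_dvd_pow _ (Nat.sub_le u r)) h

/-- The `F[t]`-module endomorphism of `V = F[t]/(t^u) ⊕ t^r·F[t]/(t^u)` given by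
`M(v₁, v₂) = (a v₁ + g v₂, h t^r v₁ + b v₂)`, where the second summand
`t^r·F[t]/(t^u)` is identified with `F[t]/(t^{u-r})` via `w ↦ t^r w`
(so the lower-left entry becomes `v₁ ↦ h v₁ mod t^{u-r}` and the upper-right
entry becomes `w ↦ t^r g w mod t^u`). -/
def Mmap (u r : ℕ) (hru : r ≤ u) (a g h b : F[X]) :
    (PQ F u × PQ F (u - r)) →ₗ[F] (PQ F u × PQ F (u - r)) :=
  LinearMap.prod
    ((mulQ F u u a (dvd_A F u a)).comp (LinearMap.fst F (PQ F u) (PQ F (u - r))) +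
      (mulQ F (u - r) u (X ^ r * g) (dvd_G F u r hru g)).comp
        (LinearMap.snd F (PQ F u) (PQ F (u - r))))
    ((mulQ F u (u - r) h (dvd_H F u r h)).comp (LinearMap.fst F (PQ F u) (PQ F (u - r))) +
      (mulQ F (u - r) (u - r) b (dvd_A F (u - r) b)).comp
        (LinearMap.snd F (PQ F u) (PQ F (u - r))))

/-- `B` has Jordan type `P` (a partition given as the multiset of its parts):
the corank of every power of `B` is the one prescribed by `P`, i.e.
`dim ker (B^s) = Σ_i min(pᵢ, s)` for all `s ≥ 0`. -/
def JordanTypeIs {V : Type*} [AddCommGroup V] [Module F V] (B : Module.End F V)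
    (P : Multiset ℕ) : Prop :=
  ∀ s : ℕ, Module.finrank F (LinearMap.ker (B ^ s)) = (P.map fun p => min p s).sum

/-- Index type for the `N = 4u-3r-2` coordinates
`(a_1,…,a_{u−1}, b_1,…,b_{u−r−1}, g_0,…,g_{u−r−1}, h_0,…,h_{u−r−1})`. -/
abbrev Vars (u r : ℕ) : Type := Fin (u - 1) ⊕ Fin (u - r - 1) ⊕ Fin (u - r) ⊕ Fin (u - r)

/-- `a = Σ_{i=1}^{u−1} a_i t^i`. -/
def paOf (u r : ℕ) (x : Vars u r → F) : F[X] :=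
  ∑ i : Fin (u - 1), C (x (Sum.inl i)) * X ^ ((i : ℕ) + 1)

/-- `b = Σ_{i=1}^{u−r−1} b_i t^i`. -/
def pbOf (u r : ℕ) (x : Vars u r → F) : F[X] :=
  ∑ i : Fin (u - r - 1), C (x (Sum.inr (Sum.inl i))) * X ^ ((i : ℕ) + 1)

/-- `g = Σ_{i=0}^{u−r−1} g_i t^i`. -/
def pgOf (u r : ℕ) (x : Vars u r → F) : F[X] :=
  ∑ i : Fin (u - r), C (x (Sum.inr (Sum.inr (Sum.inl i)))) * X ^ (i : ℕ)

/-- `h = Σ_{i=0}^{u−r−1} h_i t^i`. -/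
def phOf (u r : ℕ) (x : Vars u r → F) : F[X] :=
  ∑ i : Fin (u - r), C (x (Sum.inr (Sum.inr (Sum.inr i)))) * X ^ (i : ℕ)

/-- The nilpotent endomorphism `M_x` of `V` determined by the point `x ∈ F^N`. -/
def Mx (u r : ℕ) (hru : r ≤ u) (x : Vars u r → F) :
    Module.End F (PQ F u × PQ F (u - r)) :=
  Mmap F u r hru (paOf F u r x) (pgOf F u r x) (phOf F u r x) (pbOf F u r x)

/-- The variable `a_i` as a polynomial function on `F^N` (meaningful for `1 ≤ i ≤ u-1`). -/
def Av (u r : ℕ) (i : ℕ) : MvPolynomial (Vars u r) F :=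
  if h : i - 1 < u - 1 then MvPolynomial.X (Sum.inl ⟨i - 1, h⟩) else 0

/-- The variable `b_i` as a polynomial function on `F^N` (meaningful for `1 ≤ i ≤ u-r-1`). -/
def Bv (u r : ℕ) (i : ℕ) : MvPolynomial (Vars u r) F :=
  if h : i - 1 < u - r - 1 then MvPolynomial.X (Sum.inr (Sum.inl ⟨i - 1, h⟩)) else 0

/-- The variable `g_i` as a polynomial function on `F^N` (meaningful for `0 ≤ i ≤ u-r-1`). -/
def Gv (u r : ℕ) (i : ℕ) : MvPolynomial (Vars u r) F :=
  if h : i < u - r then MvPolynomial.X (Sum.inr (Sum.inr (Sum.inl ⟨i, h⟩))) else 0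

/-- The variable `h_i` as a polynomial function on `F^N` (meaningful for `0 ≤ i ≤ u-r-1`). -/
def Hv (u r : ℕ) (i : ℕ) : MvPolynomial (Vars u r) F :=
  if h : i < u - r then MvPolynomial.X (Sum.inr (Sum.inr (Sum.inr ⟨i, h⟩))) else 0

/-- The set of polynomials `E^Q_{k,l}` for `Q = (u, u-r)`:
`{a_1,…,a_{k−1}, b_1,…,b_{l−1}}` if `k+l ≤ r`, and
`{a_1,…,a_{k−1}, b_1,…,b_{r−k−1}}` together with the quadratic polynomials
`Σ_{j=0}^{m} a_{k+j} b_{r−k+m−j} − Σ_{j=0}^{m} g_j h_{m−j}` for `0 ≤ m ≤ k+l−r−1`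
if `k+l ≥ r+1`. -/
def Eset (u r k l : ℕ) : Set (MvPolynomial (Vars u r) F) :=
  if k + l ≤ r then
    {p | ∃ i, 1 ≤ i ∧ i ≤ k - 1 ∧ p = Av F u r i} ∪
      {p | ∃ i, 1 ≤ i ∧ i ≤ l - 1 ∧ p = Bv F u r i}
  else
    {p | ∃ i, 1 ≤ i ∧ i ≤ k - 1 ∧ p = Av F u r i} ∪
      {p | ∃ i, 1 ≤ i ∧ i ≤ r - k - 1 ∧ p = Bv F u r i} ∪
      {p | ∃ m, m ≤ k + l - r - 1 ∧ p =
        (∑ j ∈ Finset.range (m + 1), Av F u r (k + j) * Bv F u r (r - k + m - j)) -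
          (∑ j ∈ Finset.range (m + 1), Gv F u r j * Hv F u r (m - j))}

/-- The common zero locus in `F^N` of a set `T` of polynomials. -/
def zLocus (u r : ℕ) (T : Set (MvPolynomial (Vars u r) F)) : Set (Vars u r → F) :=
  {x | ∀ p ∈ T, MvPolynomial.eval x p = 0}

/-- `X^Q_{k,l}`, the common zero locus of `E^Q_{k,l}`. -/
def Xlocus (u r k l : ℕ) : Set (Vars u r → F) := zLocus F u r (Eset F u r k l)

/-- Zariski-closed subsets of `F^N`: common zero loci of sets of polynomials. -/
def IsZClosed (u r : ℕ) (S : Set (Vars u r → F)) : Prop :=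
  ∃ T : Set (MvPolynomial (Vars u r) F), S = zLocus F u r T

/-- The Zariski closure of a subset of `F^N`. -/
def zClosure (u r : ℕ) (S : Set (Vars u r → F)) : Set (Vars u r → F) :=
  ⋂₀ {C | IsZClosed F u r C ∧ S ⊆ C}

end

section Burge

/-- Scanning the frequency sequence `f` downward from `j`, forming backward pairs:
whenever `f j > 0` (and `j` has not been consumed by a previously formed pair),
put `j` in the set and consume the index `j - 1`. -/
def RsetGo (f : ℕ → ℕ) : ℕ → Finset ℕ
  | 0 => ∅
  | 1 => if 0 < f 1 then {1} else ∅
  | (j + 2) => if 0 < f (j + 2) then insert (j + 2) (RsetGo f j) else RsetGo f (j + 1)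

/-- The set `R(P)` of a partition `P` (given as the multiset of its parts, with
frequency sequence `j ↦ P.count j`); the scan starts at the largest part `P.sup`. -/
def Rset (P : Multiset ℕ) : Finset ℕ := RsetGo (fun j => P.count j) P.sup

/-- The partition `∂P`: for each `j ∈ R(P)` one copy of the part `j` is replaced by
`j - 1` (discarded when `j - 1 = 0`). -/
def dP (P : Multiset ℕ) : Multiset ℕ :=
  (P - (Rset P).val) + (((Rset P).val.map fun j => j - 1).filter fun j => 0 < j)

/-- Fuel-driven computation of the Burge code; `false` stands for `α`, `true` for `β`.
(The fuel `P.sum + 1` used in `burgeCode` always suffices, since `∂` strictly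
decreases the size of a nonempty partition.) -/
def burgeGo : ℕ → Multiset ℕ → List Bool
  | 0, _ => []
  | (n + 1), P =>
    if P = 0 then [false]
    else (if 1 ∈ Rset P then true else false) :: burgeGo n (dP P)

/-- The Burge code of the partition `P`: the word `w_1 ⋯ w_m` with `w_i = β` (`true`)
if `∂^{i-1} P` is in class `B` (i.e. `1 ∈ R(∂^{i-1}P)`) and `w_i = α` (`false`)
otherwise, where `m = min { i : ∂^{i-1} P = (0) }`. -/
def burgeCode (P : Multiset ℕ) : List Bool := burgeGo (P.sum + 1) P

/-- The almost rectangular partition `[m]^k` of `m` into `k` parts, each equal to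
`⌈m/k⌉` or `⌊m/k⌋`. -/
def arPart (m k : ℕ) : Multiset ℕ :=
  Multiset.replicate (m % k) (m / k + 1) + Multiset.replicate (k - m % k) (m / k)

/-- Greedy decomposition of a weakly decreasing list of parts into maximal
almost rectangular segments from the top (fuel-driven helper). -/
def greedyGo : ℕ → List ℕ → List (List ℕ)
  | 0, _ => []
  | _ + 1, [] => []
  | n + 1, p :: rest =>
    ((p :: rest).takeWhile fun q => decide (p ≤ q + 1)) ::
      greedyGo n ((p :: rest).dropWhile fun q => decide (p ≤ q + 1))

/-- The greedy decomposition of a weakly decreasing list of parts into maximal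
almost rectangular subpartitions from the top. -/
def greedy (l : List ℕ) : List (List ℕ) := greedyGo l.length l

end Burge



section Helpers

variable {F : Type*} [Field F]

lemma pq_mk_eq_zero (m : ℕ) (p : F[X]) :
    (Submodule.Quotient.mk p : PQ F m) = 0 ↔ (X : F[X]) ^ m ∣ p := by
  rw [Submodule.Quotient.mk_eq_zero, Ideal.mem_span_singleton]

lemma pq_finrank (m : ℕ) : Module.finrank F (PQ F m) = m := by
  have h := finrank_quotient_span_eq_natDegree (f := (X : F[X]) ^ m)
  simpa using h

lemma pq_finite (m : ℕ) : Module.Finite F (PQ F m) :=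
  (Polynomial.monic_X_pow m).finite_quotient

lemma mulQ_mk (m m' : ℕ) (c : F[X]) (h : (X : F[X]) ^ m' ∣ c * X ^ m) (p : F[X]) :
    mulQ F m m' c h (Submodule.Quotient.mk p) = Submodule.Quotient.mk (c * p) := rfl

lemma Mmap_mk (u r : ℕ) (hru : r ≤ u) (a g h b p q : F[X]) :
    Mmap F u r hru a g h b (Submodule.Quotient.mk p, Submodule.Quotient.mk q) =
      (Submodule.Quotient.mk (a * p + X ^ r * g * q), Submodule.Quotient.mk (h * p + b * q)) :=
  rfl

lemma Mmap_mul (u r : ℕ) (hru : r ≤ u) (a g h b a' g' h' b' : F[X]) :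
    (Mmap F u r hru a g h b : Module.End F _) * Mmap F u r hru a' g' h' b' =
      Mmap F u r hru (a * a' + X ^ r * g * h') (a * g' + g * b') (h * a' + b * h')
        (X ^ r * h * g' + b * b') := by
  refine LinearMap.ext ?_
  rintro ⟨v, w⟩
  obtain ⟨p, rfl⟩ := Submodule.Quotient.mk_surjective _ v
  obtain ⟨q, rfl⟩ := Submodule.Quotient.mk_surjective _ w
  rw [Module.End.mul_apply, Mmap_mk, Mmap_mk, Mmap_mk]
  congr 2 <;> ring

lemma Mmap_eq_zero (u r : ℕ) (hru : r ≤ u) (a g h b : F[X]) (ha : (X : F[X]) ^ u ∣ a)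
    (hg : (X : F[X]) ^ u ∣ X ^ r * g) (hh : (X : F[X]) ^ (u - r) ∣ h)
    (hb : (X : F[X]) ^ (u - r) ∣ b) : Mmap F u r hru a g h b = 0 := by
  refine LinearMap.ext ?_
  rintro ⟨v, w⟩
  obtain ⟨p, rfl⟩ := Submodule.Quotient.mk_surjective _ v
  obtain ⟨q, rfl⟩ := Submodule.Quotient.mk_surjective _ w
  rw [Mmap_mk, LinearMap.zero_apply, Prod.mk_eq_zero, pq_mk_eq_zero, pq_mk_eq_zero]
  exact ⟨dvd_add (ha.mul_right _) (hg.mul_right _), dvd_add (hh.mul_right _) (hb.mul_right _)⟩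

lemma coprime_X_pow (A : F[X]) (hA : A.coeff 0 ≠ 0) (m : ℕ) : IsCoprime A ((X : F[X]) ^ m) := by
  refine IsCoprime.pow_right ?_
  refine IsCoprime.symm ?_
  rw [Polynomial.irreducible_X.coprime_iff_not_dvd, Polynomial.X_dvd_iff]
  exact hA

lemma ker_finrank (u r : ℕ) (hru : r ≤ u) (G H B A' : F[X]) (e : ℕ) (he : e ≤ u)
    (hA' : A'.coeff 0 ≠ 0) (hG : (X : F[X]) ^ e ∣ X ^ r * G)
    (hH : (X : F[X]) ^ (u - r) ∣ H * X ^ (u - e))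
    (hdet : (X : F[X]) ^ (e + (u - r)) ∣ X ^ e * A' * B - X ^ r * G * H) :
    Module.finrank F (LinearMap.ker (Mmap F u r hru (X ^ e * A') G H B)) = e + (u - r) := by
  obtain ⟨G', hG'⟩ := hG
  have hX : (X : F[X]) ^ e ≠ 0 := pow_ne_zero _ Polynomial.X_ne_zero
  have hXu : (X : F[X]) ^ u = X ^ e * X ^ (u - e) := by rw [← pow_add, Nat.add_sub_cancel' he]
  have hdet' : (X : F[X]) ^ (u - r) ∣ A' * B - G' * H := by
    rw [hG', pow_add] at hdet
    have : (X : F[X]) ^ e * A' * B - X ^ e * G' * H = X ^ e * (A' * B - G' * H) := by ring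
    rw [this] at hdet
    exact (mul_dvd_mul_iff_left hX).1 hdet
  set φ : (PQ F u × PQ F (u - r)) →ₗ[F] PQ F u :=
    (LinearMap.fst F (PQ F u) (PQ F (u - r))).comp (Mmap F u r hru (X ^ e * A') G H B) with hφ
  have hφmk : ∀ p q : F[X], φ (Submodule.Quotient.mk p, Submodule.Quotient.mk q) =
      Submodule.Quotient.mk (X ^ e * (A' * p + G' * q)) := by
    intro p q
    rw [hφ, LinearMap.comp_apply, Mmap_mk, LinearMap.fst_apply, hG']
    ring_nf
  have hker : LinearMap.ker (Mmap F u r hru (X ^ e * A') G H B) = LinearMap.ker φ := by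
    refine le_antisymm ?_ ?_
    · intro v hv
      rw [LinearMap.mem_ker] at hv ⊢
      rw [hφ, LinearMap.comp_apply, hv, map_zero]
    · rintro ⟨v, w⟩ hv
      obtain ⟨p, rfl⟩ := Submodule.Quotient.mk_surjective _ v
      obtain ⟨q, rfl⟩ := Submodule.Quotient.mk_surjective _ w
      rw [LinearMap.mem_ker] at hv ⊢
      rw [hφmk, pq_mk_eq_zero, hXu] at hv
      obtain ⟨m, hm⟩ := (mul_dvd_mul_iff_left hX).1 hv
      rw [Mmap_mk, Prod.mk_eq_zero, pq_mk_eq_zero, pq_mk_eq_zero]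
      constructor
      · rw [hG', hXu]
        refine ⟨m, ?_⟩
        linear_combination (X : F[X]) ^ e * hm
      · have h1 : (X : F[X]) ^ (u - r) ∣ A' * (H * p + B * q) := by
          have : A' * (H * p + B * q) = H * X ^ (u - e) * m + (A' * B - G' * H) * q := by
            linear_combination H * hm
          rw [this]
          exact dvd_add (hH.mul_right _) (hdet'.mul_right _)
        exact (coprime_X_pow A' hA' (u - r)).symm.dvd_of_dvd_mul_left h1
  have hj0 : (X : F[X]) ^ u ∣ X ^ e * X ^ (u - e) := by rw [hXu]
  set j := mulQ F (u - e) u (X ^ e) hj0 with hj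
  have hjinj : Function.Injective j := by
    rw [injective_iff_map_eq_zero]
    intro v hv
    obtain ⟨p, rfl⟩ := Submodule.Quotient.mk_surjective _ v
    rw [hj, mulQ_mk, pq_mk_eq_zero, hXu] at hv
    rw [pq_mk_eq_zero]
    exact (mul_dvd_mul_iff_left hX).1 hv
  have hrange : LinearMap.range φ = LinearMap.range j := by
    refine le_antisymm ?_ ?_
    · rintro _ ⟨⟨v, w⟩, rfl⟩
      obtain ⟨p, rfl⟩ := Submodule.Quotient.mk_surjective _ v
      obtain ⟨q, rfl⟩ := Submodule.Quotient.mk_surjective _ w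
      exact ⟨Submodule.Quotient.mk (A' * p + G' * q), by rw [hφmk, hj, mulQ_mk]⟩
    · rintro _ ⟨v, rfl⟩
      obtain ⟨p, rfl⟩ := Submodule.Quotient.mk_surjective _ v
      obtain ⟨c, d, hcd⟩ := coprime_X_pow A' hA' u
      refine ⟨(Submodule.Quotient.mk (c * p), Submodule.Quotient.mk 0), ?_⟩
      rw [hφmk, hj, mulQ_mk, ← sub_eq_zero, ← Submodule.Quotient.mk_sub, pq_mk_eq_zero]
      refine ⟨- (X ^ e * d * p), ?_⟩
      linear_combination (X : F[X]) ^ e * p * hcd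
  have := pq_finite (F := F) u
  have := pq_finite (F := F) (u - r)
  have := pq_finite (F := F) (u - e)
  have h1 := LinearMap.finrank_range_add_finrank_ker φ
  rw [hrange, LinearMap.finrank_range_of_inj hjinj, Module.finrank_prod, pq_finrank, pq_finrank,
    pq_finrank] at h1
  rw [hker]
  omega

/-- The linear recursion satisfied by the leading coefficients. -/
def leadSeq {R : Type*} [CommRing R] (p q s t x y : R) : ℕ → R × R
  | 0 => (x, y)
  | n + 1 => (p * (leadSeq p q s t x y n).1 + q * (leadSeq p q s t x y n).2,
      s * (leadSeq p q s t x y n).1 + t * (leadSeq p q s t x y n).2)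

lemma leadSeq_map {R S : Type*} [CommRing R] [CommRing S] (f : R →+* S) (p q s t x y : R)
    (n : ℕ) : f (leadSeq p q s t x y n).1 = (leadSeq (f p) (f q) (f s) (f t) (f x) (f y) n).1 ∧
      f (leadSeq p q s t x y n).2 = (leadSeq (f p) (f q) (f s) (f t) (f x) (f y) n).2 := by
  induction n with
  | zero => exact ⟨rfl, rfl⟩
  | succ n ih => simp [leadSeq, ih.1, ih.2]

lemma Mmap_pow (u r k c : ℕ) (hru : r ≤ u) (hck : c ≤ k) (hkr : k + c ≤ r) (a1 g h b1 : F[X])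
    (n : ℕ) : ∃ α γ η β : F[X],
      (Mmap F u r hru (X ^ k * a1) g h (X ^ c * b1) : Module.End F _) ^ (n + 1) =
        Mmap F u r hru (X ^ (k + n * c) * α) (X ^ (n * c) * γ) (X ^ (n * c) * η)
          (X ^ ((n + 1) * c) * β) ∧
      (X ^ (k + n * c) * α) * (X ^ ((n + 1) * c) * β) -
        X ^ r * (X ^ (n * c) * γ) * (X ^ (n * c) * η) =
          ((X ^ k * a1) * (X ^ c * b1) - X ^ r * g * h) ^ (n + 1) ∧
      (α.coeff 0, η.coeff 0) = leadSeq (0 ^ (k - c) * a1.coeff 0) (0 ^ (r - k - c) * g.coeff 0)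
        (0 ^ (k - c) * h.coeff 0) (b1.coeff 0) (a1.coeff 0) (h.coeff 0) n := by
  obtain ⟨k', rfl⟩ := Nat.exists_eq_add_of_le hck
  obtain ⟨r', rfl⟩ := Nat.exists_eq_add_of_le hkr
  have e1 : c + k' - c = k' := by omega
  have e2 : c + k' + c + r' - (c + k') - c = r' := by omega
  rw [e1, e2]
  induction n with
  | zero =>
    refine ⟨a1, g, h, b1, ?_, ?_, rfl⟩
    · simp
    · simp
  | succ n ih =>
    obtain ⟨α, γ, η, β, h1, h2, h3⟩ := ih
    refine ⟨X ^ k' * a1 * α + X ^ r' * g * η, X ^ k' * a1 * γ + g * β,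
      X ^ k' * h * α + b1 * η, X ^ (k' + r') * h * γ + b1 * β, ?_, ?_, ?_⟩
    · rw [pow_succ', h1, Mmap_mul]
      congr 1 <;> ring
    · rw [pow_succ, ← h2]
      ring
    · rw [leadSeq, ← h3]
      simp [Polynomial.mul_coeff_zero, Polynomial.coeff_X_pow, Polynomial.coeff_zero_eq_eval_zero]

lemma finrank_pow (u r k c : ℕ) (hru : r ≤ u) (hck : c ≤ k) (hkr : k + c ≤ r) (hc : 1 ≤ c)
    (a1 g h b1 : F[X])
    (hδ : (X : F[X]) ^ (k + (u - r)) ∣ (X ^ k * a1) * (X ^ c * b1) - X ^ r * g * h) (n : ℕ)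
    (hn : k + n * c < u → (leadSeq (0 ^ (k - c) * a1.coeff 0) (0 ^ (r - k - c) * g.coeff 0)
        (0 ^ (k - c) * h.coeff 0) (b1.coeff 0) (a1.coeff 0) (h.coeff 0) n).1 ≠ 0) :
    Module.finrank F (LinearMap.ker
      ((Mmap F u r hru (X ^ k * a1) g h (X ^ c * b1) : Module.End F _) ^ (n + 1))) =
      min (k + n * c) u + (u - r) := by
  obtain ⟨α, γ, η, β, h1, h2, h3⟩ := Mmap_pow u r k c hru hck hkr a1 g h b1 n
  rw [h1]
  by_cases hlt : k + n * c < u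
  · rw [min_eq_left hlt.le]
    have hα := hn hlt
    rw [← h3] at hα
    refine ker_finrank u r hru _ _ _ α _ hlt.le hα ?_ ?_ ?_
    · rw [← mul_assoc, ← pow_add]
      exact (pow_dvd_pow _ (by omega)).mul_right _
    · rw [mul_right_comm, ← pow_add]
      exact (pow_dvd_pow _ (by omega)).mul_right _
    · rw [h2]
      refine dvd_trans ?_ (pow_dvd_pow_of_dvd hδ (n + 1))
      rw [← pow_mul]
      refine pow_dvd_pow _ ?_
      have : n * c ≤ n * k := Nat.mul_le_mul_left _ hck
      nlinarith [Nat.zero_le (n * (u - r))]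
  · rw [min_eq_right (not_lt.1 hlt)]
    have hz := Mmap_eq_zero (F := F) u r hru (X ^ (k + n * c) * α) (X ^ (n * c) * γ)
      (X ^ (n * c) * η) (X ^ ((n + 1) * c) * β) ((pow_dvd_pow _ (by omega)).mul_right _)
      (by rw [← mul_assoc, ← pow_add]; exact (pow_dvd_pow _ (by omega)).mul_right _)
      ((pow_dvd_pow _ (by omega)).mul_right _)
      ((pow_dvd_pow _ (by rw [add_mul]; omega)).mul_right _)
    have := pq_finite (F := F) u
    have := pq_finite (F := F) (u - r)
    rw [hz, LinearMap.ker_zero, finrank_top, Module.finrank_prod, pq_finrank, pq_finrank]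

lemma arPart_sum (m k s : ℕ) (hk : 1 ≤ k) :
    ((arPart m k).map fun p => min p s).sum = min (k * s) m := by
  have hm := Nat.div_add_mod m k
  have hlt := Nat.mod_lt m hk
  simp only [arPart, Multiset.map_add, Multiset.map_replicate, Multiset.sum_add,
    Multiset.sum_replicate, smul_eq_mul]
  generalize m / k = q at *
  generalize m % k = t at *
  obtain ⟨w, rfl⟩ := Nat.exists_eq_add_of_le hlt.le
  rw [Nat.add_sub_cancel_left]
  subst hm
  rcases le_or_gt s q with h | h
  · rw [min_eq_right h, min_eq_right (by omega : s ≤ q + 1), min_eq_left]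
    · ring
    · have := Nat.mul_le_mul_left (t + w) h
      omega
  · rw [min_eq_left h.le, min_eq_left (by omega : q + 1 ≤ s), min_eq_right]
    · ring
    · have := Nat.mul_le_mul_left (t + w) h
      rw [Nat.mul_succ] at this
      omega

lemma rep_sum (l n : ℕ) :
    ((Multiset.replicate l 1).map fun p => min p (n + 1)).sum = l := by
  simp [Multiset.map_replicate]

lemma eval_Av (u r i : ℕ) (hi : 1 ≤ i) (x : Vars u r → F) :
    MvPolynomial.eval x (Av F u r i) = (paOf F u r x).coeff i := by
  unfold Av paOf
  rw [Polynomial.finsetSum_coeff]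
  simp only [Polynomial.coeff_C_mul, Polynomial.coeff_X_pow]
  split_ifs with h
  · rw [Finset.sum_eq_single (⟨i - 1, h⟩ : Fin (u - 1))]
    · rw [if_pos (show i = i - 1 + 1 by omega), mul_one, MvPolynomial.eval_X]
    · intro b _ hb
      have : i ≠ b + 1 := fun hh => hb (Fin.ext (by simp; omega))
      simp [this]
    · simp
  · rw [map_zero, Finset.sum_eq_zero]
    intro b _
    have : i ≠ b + 1 := by have := b.2; omega
    simp [this]

lemma eval_Bv (u r i : ℕ) (hi : 1 ≤ i) (x : Vars u r → F) :
    MvPolynomial.eval x (Bv F u r i) = (pbOf F u r x).coeff i := by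
  unfold Bv pbOf
  rw [Polynomial.finsetSum_coeff]
  simp only [Polynomial.coeff_C_mul, Polynomial.coeff_X_pow]
  split_ifs with h
  · rw [Finset.sum_eq_single (⟨i - 1, h⟩ : Fin (u - r - 1))]
    · rw [if_pos (show i = i - 1 + 1 by omega), mul_one, MvPolynomial.eval_X]
    · intro b _ hb
      have : i ≠ b + 1 := fun hh => hb (Fin.ext (by simp; omega))
      simp [this]
    · simp
  · rw [map_zero, Finset.sum_eq_zero]
    intro b _
    have : i ≠ b + 1 := by have := b.2; omega
    simp [this]

lemma eval_Gv (u r i : ℕ) (x : Vars u r → F) :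
    MvPolynomial.eval x (Gv F u r i) = (pgOf F u r x).coeff i := by
  unfold Gv pgOf
  rw [Polynomial.finsetSum_coeff]
  simp only [Polynomial.coeff_C_mul, Polynomial.coeff_X_pow]
  split_ifs with h
  · rw [Finset.sum_eq_single (⟨i, h⟩ : Fin (u - r))]
    · simp
    · intro b _ hb
      have : i ≠ b := fun hh => hb (Fin.ext (by simp; omega))
      simp [this]
    · simp
  · rw [map_zero, Finset.sum_eq_zero]
    intro b _
    have : i ≠ b := by have := b.2; omega
    simp [this]

lemma eval_Hv (u r i : ℕ) (x : Vars u r → F) :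
    MvPolynomial.eval x (Hv F u r i) = (phOf F u r x).coeff i := by
  unfold Hv phOf
  rw [Polynomial.finsetSum_coeff]
  simp only [Polynomial.coeff_C_mul, Polynomial.coeff_X_pow]
  split_ifs with h
  · rw [Finset.sum_eq_single (⟨i, h⟩ : Fin (u - r))]
    · simp
    · intro b _ hb
      have : i ≠ b := fun hh => hb (Fin.ext (by simp; omega))
      simp [this]
    · simp
  · rw [map_zero, Finset.sum_eq_zero]
    intro b _
    have : i ≠ b := by have := b.2; omega
    simp [this]

lemma pa_coeff_zero (u r : ℕ) (x : Vars u r → F) : (paOf F u r x).coeff 0 = 0 := by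
  simp [paOf, Polynomial.finsetSum_coeff, Polynomial.coeff_X_pow]

lemma pb_coeff_zero (u r : ℕ) (x : Vars u r → F) : (pbOf F u r x).coeff 0 = 0 := by
  simp [pbOf, Polynomial.finsetSum_coeff, Polynomial.coeff_X_pow]

lemma pb_coeff_ge (u r i : ℕ) (hi : u - r ≤ i) (x : Vars u r → F) :
    (pbOf F u r x).coeff i = 0 := by
  rcases Nat.eq_zero_or_pos i with rfl | h
  · exact pb_coeff_zero u r x
  · rw [← eval_Bv u r i h, Bv, dif_neg (by omega), map_zero]

/-- Structure of the points of `X^Q_{k,u-r}`. -/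
lemma locus_struct (u r k : ℕ) (hru : r < u) (hk1 : 1 ≤ k) (hk2 : k < r) (x : Vars u r → F)
    (hx : x ∈ Xlocus F u r k (u - r)) :
    (X : F[X]) ^ k ∣ paOf F u r x ∧ (X : F[X]) ^ (r - k) ∣ pbOf F u r x ∧
      (X : F[X]) ^ (k + (u - r)) ∣
        paOf F u r x * pbOf F u r x - X ^ r * pgOf F u r x * phOf F u r x := by
  by_cases hc : k + (u - r) ≤ r
  · simp only [Xlocus, zLocus, Eset, if_pos hc, Set.mem_ofPred_eq, Set.mem_union] at hx
    have hb : pbOf F u r x = 0 := by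
      ext i
      rw [Polynomial.coeff_zero]
      by_cases hi : u - r ≤ i
      · exact pb_coeff_ge u r i hi x
      · rcases Nat.eq_zero_or_pos i with rfl | h
        · exact pb_coeff_zero u r x
        · rw [← eval_Bv u r i h]
          exact hx _ (Or.inr ⟨i, h, by omega, rfl⟩)
    refine ⟨?_, ?_, ?_⟩
    · rw [Polynomial.X_pow_dvd_iff]
      intro i hi
      rcases Nat.eq_zero_or_pos i with rfl | h
      · exact pa_coeff_zero u r x
      · rw [← eval_Av u r i h]
        exact hx _ (Or.inl ⟨i, h, by omega, rfl⟩)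
    · rw [hb]; exact dvd_zero _
    · rw [hb, mul_zero, zero_sub, dvd_neg, mul_assoc]
      exact (pow_dvd_pow _ hc).mul_right _
  · simp only [Xlocus, zLocus, Eset, if_neg hc, Set.mem_ofPred_eq, Set.mem_union] at hx
    have ha : (X : F[X]) ^ k ∣ paOf F u r x := by
      rw [Polynomial.X_pow_dvd_iff]
      intro i hi
      rcases Nat.eq_zero_or_pos i with rfl | h
      · exact pa_coeff_zero u r x
      · rw [← eval_Av u r i h]
        exact hx _ (Or.inl (Or.inl ⟨i, h, by omega, rfl⟩))
    have hb : (X : F[X]) ^ (r - k) ∣ pbOf F u r x := by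
      rw [Polynomial.X_pow_dvd_iff]
      intro i hi
      rcases Nat.eq_zero_or_pos i with rfl | h
      · exact pb_coeff_zero u r x
      · rw [← eval_Bv u r i h]
        exact hx _ (Or.inl (Or.inr ⟨i, h, by omega, rfl⟩))
    refine ⟨ha, hb, ?_⟩
    obtain ⟨a1, ha1⟩ := ha
    obtain ⟨b1, hb1⟩ := hb
    have hd : paOf F u r x * pbOf F u r x - X ^ r * pgOf F u r x * phOf F u r x =
        X ^ r * (a1 * b1 - pgOf F u r x * phOf F u r x) := by
      rw [ha1, hb1]
      have : (X : F[X]) ^ r = X ^ k * X ^ (r - k) := by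
        rw [← pow_add, Nat.add_sub_cancel' hk2.le]
      rw [this]; ring
    rw [hd]
    have h2 : (X : F[X]) ^ (k + (u - r) - r) ∣ a1 * b1 - pgOf F u r x * phOf F u r x := by
      rw [Polynomial.X_pow_dvd_iff]
      intro m hm
      have h3 := hx _ (Or.inr ⟨m, by omega, rfl⟩)
      rw [Polynomial.coeff_sub, Polynomial.coeff_mul, Polynomial.coeff_mul,
        Finset.Nat.sum_antidiagonal_eq_sum_range_succ_mk,
        Finset.Nat.sum_antidiagonal_eq_sum_range_succ_mk, ← h3]
      simp only [map_sub, map_sum, map_mul, eval_Gv, eval_Hv]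
      congr 1
      refine Finset.sum_congr rfl fun j hj => ?_
      have hj' : j < m + 1 := Finset.mem_range.1 hj
      rw [eval_Av u r _ (by omega), eval_Bv u r _ (by omega), ha1, hb1, add_comm k j,
        Polynomial.coeff_X_pow_mul, show r - k + m - j = (m - j) + (r - k) by omega,
        Polynomial.coeff_X_pow_mul]
    have := mul_dvd_mul_left ((X : F[X]) ^ r) h2
    rw [← pow_add] at this
    rwa [show r + (k + (u - r) - r) = k + (u - r) by omega] at this

/-- The generic sequence of leading coefficients, as polynomials. -/
noncomputable def genSeq (F : Type*) [Field F] (u r k c n : ℕ) : MvPolynomial (Vars u r) F :=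
  (leadSeq (0 ^ (k - c) * Av F u r k) (0 ^ (r - k - c) * Gv F u r 0)
    (0 ^ (k - c) * Hv F u r 0) (Bv F u r c) (Av F u r k) (Hv F u r 0) n).1

lemma eval_genSeq (u r k c n : ℕ) (hk : 1 ≤ k) (hc : 1 ≤ c) (x : Vars u r → F) :
    MvPolynomial.eval x (genSeq F u r k c n) =
      (leadSeq (0 ^ (k - c) * (paOf F u r x).coeff k) (0 ^ (r - k - c) * (pgOf F u r x).coeff 0)
        (0 ^ (k - c) * (phOf F u r x).coeff 0) ((pbOf F u r x).coeff c)
        ((paOf F u r x).coeff k) ((phOf F u r x).coeff 0) n).1 := by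
  rw [genSeq, (leadSeq_map (MvPolynomial.eval x) _ _ _ _ _ _ n).1]
  simp only [map_mul, map_pow, map_zero, eval_Av u r k hk, eval_Bv u r c hc, eval_Gv, eval_Hv]

/-- A point with `a = t^k`, `b = ε t^q`, `g = h = ε`. -/
def specPt (F : Type*) [Field F] (u r k q : ℕ) (ε : F) : Vars u r → F
  | Sum.inl i => if (i : ℕ) + 1 = k then 1 else 0
  | Sum.inr (Sum.inl i) => if (i : ℕ) + 1 = q then ε else 0
  | Sum.inr (Sum.inr (Sum.inl i)) => if (i : ℕ) = 0 then ε else 0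
  | Sum.inr (Sum.inr (Sum.inr i)) => if (i : ℕ) = 0 then ε else 0

lemma spec_Av (u r k q : ℕ) (ε : F) (i : ℕ) (hi : 1 ≤ i) (hk : k < u) :
    MvPolynomial.eval (specPt F u r k q ε) (Av F u r i) = if i = k then 1 else 0 := by
  unfold Av
  split_ifs with h h' h'
  · rw [MvPolynomial.eval_X]; simp only [specPt]; rw [if_pos (by omega)]
  · rw [MvPolynomial.eval_X]; simp only [specPt]; rw [if_neg (by omega)]
  · omega
  · simp

lemma spec_Bv (u r k q : ℕ) (ε : F) (i : ℕ) (hi : 1 ≤ i) :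
    MvPolynomial.eval (specPt F u r k q ε) (Bv F u r i) =
      if i = q ∧ q < u - r then ε else 0 := by
  unfold Bv
  split_ifs with h h' h'
  · rw [MvPolynomial.eval_X]; simp only [specPt]; rw [if_pos (by omega)]
  · rw [MvPolynomial.eval_X]; simp only [specPt]; rw [if_neg (by omega)]
  · omega
  · simp

lemma spec_Gv (u r k q : ℕ) (ε : F) (i : ℕ) (hru : r < u) :
    MvPolynomial.eval (specPt F u r k q ε) (Gv F u r i) = if i = 0 then ε else 0 := by
  unfold Gv
  split_ifs with h h' h'
  · rw [MvPolynomial.eval_X]; simp only [specPt]; rw [if_pos (by omega)]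
  · rw [MvPolynomial.eval_X]; simp only [specPt]; rw [if_neg (by omega)]
  · omega
  · simp

lemma spec_Hv (u r k q : ℕ) (ε : F) (i : ℕ) (hru : r < u) :
    MvPolynomial.eval (specPt F u r k q ε) (Hv F u r i) = if i = 0 then ε else 0 := by
  unfold Hv
  split_ifs with h h' h'
  · rw [MvPolynomial.eval_X]; simp only [specPt]; rw [if_pos (by omega)]
  · rw [MvPolynomial.eval_X]; simp only [specPt]; rw [if_neg (by omega)]
  · omega
  · simp

lemma spec_mem (u r k : ℕ) (hru : r < u) (hk1 : 1 ≤ k) (hk2 : k < r) (ε : F)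
    (hε : ε * ε = ε) : specPt F u r k (r - k) ε ∈ Xlocus F u r k (u - r) := by
  by_cases hc : k + (u - r) ≤ r
  · simp only [Xlocus, zLocus, Eset, if_pos hc, Set.mem_ofPred_eq, Set.mem_union]
    rintro p (⟨i, h1, h2, rfl⟩ | ⟨i, h1, h2, rfl⟩)
    · rw [spec_Av _ _ _ _ _ _ h1 (by omega), if_neg (by omega)]
    · rw [spec_Bv _ _ _ _ _ _ h1, if_neg (by omega)]
  · simp only [Xlocus, zLocus, Eset, if_neg hc, Set.mem_ofPred_eq, Set.mem_union]
    rintro p ((⟨i, h1, h2, rfl⟩ | ⟨i, h1, h2, rfl⟩) | ⟨m, hm, rfl⟩)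
    · rw [spec_Av _ _ _ _ _ _ h1 (by omega), if_neg (by omega)]
    · rw [spec_Bv _ _ _ _ _ _ h1, if_neg (by omega)]
    · simp only [map_sub, map_sum, map_mul]
      rw [Finset.sum_eq_single 0, Finset.sum_eq_single 0]
      · rw [spec_Av _ _ _ _ _ _ (by omega) (by omega), spec_Bv _ _ _ _ _ _ (by omega),
          spec_Gv _ _ _ _ _ _ hru, spec_Hv _ _ _ _ _ _ hru]
        by_cases hm0 : m = 0
        · rw [if_pos (by omega), if_pos (by omega), if_pos rfl, if_pos (by omega), hε]; ring
        · rw [if_pos (by omega), if_neg (by omega), if_pos rfl, if_neg (by omega)]; ring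
      · intro j _ hj
        rw [spec_Gv _ _ _ _ _ _ hru, if_neg hj, zero_mul]
      · simp
      · intro j _ hj
        rw [spec_Av _ _ _ _ _ _ (by omega) (by omega), if_neg (by omega), zero_mul]
      · simp

/-- First case: only the `a`-entry contributes. -/
lemma leadSeq_one (q s t x : F) (hx : x = 1) (hs : s = 0) (n : ℕ) (y : F) (hy : y = 0) :
    leadSeq 1 q s t x y n = (1, 0) := by
  subst hx hs hy
  induction n with
  | zero => rfl
  | succ n ih => simp [leadSeq, ih]

/-- Second case. -/
lemma leadSeq_two (t : F) (n : ℕ) :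
    leadSeq 0 1 0 t 1 1 (n + 1) = (t ^ n, t ^ (n + 1)) := by
  induction n with
  | zero => simp [leadSeq]
  | succ n ih => rw [leadSeq, ih]; simp [pow_succ']

lemma exists_good (u r k c : ℕ) (hru : r < u) (hk1 : 1 ≤ k) (hk2 : k < r)
    (hc : c = min k (r - k)) :
    ∃ x ∈ Xlocus F u r k (u - r), ∀ n, k + n * c < u →
      MvPolynomial.eval x (genSeq F u r k c n) ≠ 0 := by
  have hc1 : 1 ≤ c := by omega
  by_cases h2 : 2 * k ≤ r
  · have hck : c = k := by omega
    refine ⟨specPt F u r k (r - k) 0, spec_mem u r k hru hk1 hk2 0 (by ring), ?_⟩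
    intro n _
    rw [genSeq, (leadSeq_map (MvPolynomial.eval (specPt F u r k (r - k) 0)) _ _ _ _ _ _ n).1]
    simp only [map_mul, map_pow, map_zero, spec_Av u r k (r - k) (0 : F) k hk1 (by omega),
      spec_Hv u r k (r - k) (0 : F) 0 hru, hck, Nat.sub_self, pow_zero, one_mul, if_true]
    rw [leadSeq_one _ _ _ _ rfl rfl _ _ rfl]
    exact one_ne_zero
  · have hck : c = r - k := by omega
    refine ⟨specPt F u r k (r - k) 1, spec_mem u r k hru hk1 hk2 1 (by ring), ?_⟩
    intro n hn
    rw [genSeq, (leadSeq_map (MvPolynomial.eval (specPt F u r k (r - k) 1)) _ _ _ _ _ _ n).1]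
    simp only [map_mul, map_pow, map_zero, spec_Av u r k (r - k) (1 : F) k hk1 (by omega),
      spec_Hv u r k (r - k) (1 : F) 0 hru, spec_Gv u r k (r - k) (1 : F) 0 hru,
      spec_Bv u r k (r - k) (1 : F) c hc1, if_true]
    rw [zero_pow (by omega), zero_mul, show r - k - c = 0 by omega, pow_zero, one_mul]
    rcases n with _ | _ | n
    · exact one_ne_zero
    · rw [leadSeq_two]; simp
    · rw [leadSeq_two, if_pos]
      · simp
      · refine ⟨hck, ?_⟩
        have : (n + 1 + 1) * c = n * c + c + c := by ring
        omega

end Helpers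

/-- There is a nonempty subset `U` of `X^Q_{k,u−r}`, open in the Zariski
subspace topology of `X^Q_{k,u−r} ⊆ F^N`, on which the Jordan type of `M_x` is
`([u]^k, 1^{u−r})` if `2k ≤ r` and `([u+r−2k]^{r−k}, 1^{u+2k−2r})` if `2k > r`. -/
theorem statement8 (F : Type*) [Field F] [Infinite F] (u r k : ℕ)
    (hru : r < u) (hr : 2 ≤ r) (hk1 : 1 ≤ k) (hk2 : k ≤ r - 1) :
    ∃ U : Set (Vars u r → F), U.Nonempty ∧
      (∃ C, IsZClosed F u r C ∧ U = Xlocus F u r k (u - r) ∩ Cᶜ) ∧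
      ∀ x ∈ U, JordanTypeIs F (Mx F u r hru.le x)
        (if 2 * k ≤ r then arPart u k + Multiset.replicate (u - r) 1
         else arPart (u + r - 2 * k) (r - k) + Multiset.replicate (u + 2 * k - 2 * r) 1) := by
  have hk2' : k < r := by omega
  obtain ⟨c, hc⟩ : ∃ c, c = min k (r - k) := ⟨_, rfl⟩
  have hc1 : 1 ≤ c := by omega
  classical
  set D : MvPolynomial (Vars u r) F :=
    ∏ n ∈ (Finset.range u).filter (fun n => k + n * c < u), genSeq F u r k c n with hD
  have hDne : ∀ x : Vars u r → F, MvPolynomial.eval x D ≠ 0 ↔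
      ∀ n, k + n * c < u → MvPolynomial.eval x (genSeq F u r k c n) ≠ 0 := by
    intro x
    rw [hD, map_prod, Finset.prod_ne_zero_iff]
    constructor
    · intro h n hn
      refine h n (Finset.mem_filter.2 ⟨Finset.mem_range.2 ?_, hn⟩)
      have : n * 1 ≤ n * c := Nat.mul_le_mul_left _ hc1
      omega
    · intro h n hn
      exact h n (Finset.mem_filter.1 hn).2
  refine ⟨Xlocus F u r k (u - r) ∩ (zLocus F u r {D})ᶜ, ?_,
    ⟨zLocus F u r {D}, ⟨{D}, rfl⟩, rfl⟩, ?_⟩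
  · obtain ⟨x, hx, hx'⟩ := exists_good (F := F) u r k c hru hk1 hk2' hc
    exact ⟨x, hx, fun h => (hDne x).2 hx' (h D rfl)⟩
  · rintro x ⟨hx, hxD⟩
    have hD0 : MvPolynomial.eval x D ≠ 0 := by
      intro h
      refine hxD fun p hp => ?_
      rw [Set.mem_singleton_iff.1 hp]
      exact h
    have hgen := (hDne x).1 hD0
    obtain ⟨⟨a1, ha1⟩, hb, hδ⟩ := locus_struct u r k hru hk1 hk2' x hx
    obtain ⟨b1, hb1⟩ := (pow_dvd_pow (X : F[X]) (show c ≤ r - k by omega)).trans hb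
    have hak : (paOf F u r x).coeff k = a1.coeff 0 := by
      rw [ha1]; simpa using Polynomial.coeff_X_pow_mul a1 k 0
    have hbc : (pbOf F u r x).coeff c = b1.coeff 0 := by
      rw [hb1]; simpa using Polynomial.coeff_X_pow_mul b1 c 0
    intro s
    rcases s with _ | n
    · rw [pow_zero]
      have : LinearMap.ker (1 : Module.End F (PQ F u × PQ F (u - r))) = ⊥ := by
        rw [Module.End.one_eq_id, LinearMap.ker_id]
      rw [this, finrank_bot]
      simp
    · have hrank : Module.finrank F (LinearMap.ker (Mx F u r hru.le x ^ (n + 1))) =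
          min (k + n * c) u + (u - r) := by
        unfold Mx
        rw [ha1, hb1] at hδ ⊢
        refine finrank_pow u r k c hru.le (by omega) (by omega) hc1 a1 _ _ b1 hδ n ?_
        intro hn
        have := hgen n hn
        rwa [eval_genSeq u r k c n hk1 hc1, hak, hbc] at this
      rw [hrank]
      split_ifs with h2
      · rw [Multiset.map_add, Multiset.sum_add, arPart_sum _ _ _ hk1, rep_sum,
          show c = k by omega, mul_add, mul_comm k n, mul_one, add_comm k]
      · rw [Multiset.map_add, Multiset.sum_add, arPart_sum _ _ _ (by omega), rep_sum,
          show r - k = c by omega, mul_add, mul_comm c n, mul_one]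
        omega
end

section
/- Let m ≥ k ≥ 1 be integers. Then ∂^j([m]^k) = [m−j]^k for all 0 ≤ j ≤ m−k, and the Burge code of the almost rectangular partition [m]^k is α^{m−k} β^{k} α. -/
open Polynomial

lemma RsetGo_low (f : ℕ → ℕ) (n : ℕ) (h : ∀ i, 1 ≤ i → i ≤ n → f i = 0) : RsetGo f n = ∅ := by
  induction n with
  | zero => simp [RsetGo]
  | succ n ih =>
    cases n with
    | zero => simp [RsetGo, h 1 le_rfl le_rfl]
    | succ n =>
      have h2 := h (n + 2) (by omega) (by omega)
      rw [RsetGo, h2]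
      simp only [lt_irrefl, if_false]
      exact ih (fun i h1 hi => h i h1 (by omega))

lemma Rset_two (a b q : ℕ) :
    Rset (Multiset.replicate (a + 1) (q + 1) + Multiset.replicate b q) = {q + 1} := by
  have hs : (Multiset.replicate (a + 1) (q + 1) + Multiset.replicate b q).sup = q + 1 := by
    apply le_antisymm
    · apply Multiset.sup_le.2
      intro x hx
      rw [Multiset.mem_add] at hx
      rcases hx with hx | hx
      · exact (Multiset.eq_of_mem_replicate hx).le
      · have := Multiset.eq_of_mem_replicate hx
        omega
    · apply Multiset.le_sup
      rw [Multiset.mem_add]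
      left
      simp [Multiset.mem_replicate]
  unfold Rset
  rw [hs]
  cases q with
  | zero => simp [RsetGo, Multiset.count_replicate]
  | succ q =>
    rw [RsetGo, RsetGo_low]
    · simp [Multiset.count_replicate]
    · intro i h1 hi
      simp only [Multiset.count_add, Multiset.count_replicate]
      rw [if_neg (by omega), if_neg (by omega)]

lemma dP_two (a b q : ℕ) :
    dP (Multiset.replicate (a + 1) (q + 2) + Multiset.replicate b (q + 1)) =
      Multiset.replicate a (q + 2) + Multiset.replicate (b + 1) (q + 1) := by
  unfold dP
  rw [Rset_two]
  ext x
  simp only [Finset.singleton_val, Multiset.map_singleton, Multiset.count_add,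
    Multiset.count_sub, Multiset.filter_singleton, Multiset.count_replicate]
  rw [if_pos (show 0 < q + 1 + 1 - 1 by omega)]
  simp only [Multiset.count_singleton]
  split_ifs <;> omega

lemma dP_one (a : ℕ) : dP (Multiset.replicate (a + 1) 1) = Multiset.replicate a 1 := by
  have h := Rset_two a 0 0
  simp only [Multiset.replicate_zero, add_zero, zero_add] at h
  unfold dP
  rw [h]
  ext x
  simp only [Finset.singleton_val, Multiset.map_singleton, Multiset.count_add,
    Multiset.count_sub, Multiset.filter_singleton, Multiset.count_replicate]
  rw [if_neg (show ¬ 0 < 1 - 1 by omega)]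
  have h0 : Multiset.count x (∅ : Multiset ℕ) = 0 := Multiset.count_zero x
  rw [h0]
  simp only [Multiset.count_singleton]
  split_ifs <;> omega

/-- alternative form of `[n+1]^k` -/
lemma arPart_succ (n k : ℕ) (hk : 1 ≤ k) :
    arPart (n + 1) k = Multiset.replicate (n % k + 1) (n / k + 1) +
      Multiset.replicate (k - 1 - n % k) (n / k) := by
  have hlt : n % k < k := Nat.mod_lt _ hk
  have hdm := Nat.div_add_mod n k
  unfold arPart
  by_cases h : n % k + 1 = k
  · have e : n + 1 = k * (n / k + 1) := by rw [mul_add]; omega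
    have h1 : (n + 1) % k = 0 := by rw [e]; simp
    have h2 : (n + 1) / k = n / k + 1 := by
      conv_lhs => rw [e]
      exact Nat.mul_div_cancel_left _ hk
    rw [h1, h2, h, show k - 1 - n % k = 0 by omega]
    simp
  · have e : n + 1 = (n % k + 1) + k * (n / k) := by omega
    have h1 : (n + 1) % k = n % k + 1 := by
      conv_lhs => rw [e]
      rw [Nat.add_mul_mod_self_left, Nat.mod_eq_of_lt (by omega)]
    have h2 : (n + 1) / k = n / k := by
      conv_lhs => rw [e]
      rw [Nat.add_mul_div_left _ _ hk, Nat.div_eq_of_lt (by omega), zero_add]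
    rw [h1, h2, show k - 1 - n % k = k - (n % k + 1) by omega]

lemma dP_arPart (n k : ℕ) (hk : 1 ≤ k) (h : k ≤ n) : dP (arPart (n + 1) k) = arPart n k := by
  have hlt : n % k < k := Nat.mod_lt _ hk
  rw [arPart_succ n k hk]
  unfold arPart
  obtain ⟨q, hq⟩ : ∃ q, n / k = q + 1 := ⟨n / k - 1, by have := Nat.div_pos h hk; omega⟩
  rw [hq, dP_two, show k - 1 - n % k + 1 = k - n % k by omega]

lemma one_notMem_Rset (n k : ℕ) (hk : 1 ≤ k) (h : k ≤ n) : 1 ∉ Rset (arPart (n + 1) k) := by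
  have := Nat.div_pos h hk
  rw [arPart_succ n k hk, Rset_two, Finset.mem_singleton]
  omega

lemma arPart_sum_s10 (m k : ℕ) (hk : 1 ≤ k) : (arPart m k).sum = m := by
  have hlt : m % k < k := Nat.mod_lt _ hk
  have hdm := Nat.div_add_mod m k
  obtain ⟨c, hc⟩ : ∃ c, k = m % k + c := ⟨k - m % k, by omega⟩
  simp only [arPart, Multiset.sum_add, Multiset.sum_replicate, smul_eq_mul]
  rw [show k - m % k = c by omega]
  have : k * (m / k) = (m % k + c) * (m / k) := by rw [← hc]
  rw [add_mul] at this
  rw [mul_add]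
  omega

lemma arPart_self (k : ℕ) (hk : 1 ≤ k) : arPart k k = Multiset.replicate k 1 := by
  simp [arPart, Nat.div_self hk]

lemma burgeGo_ones (k : ℕ) :
    burgeGo (k + 1) (Multiset.replicate k 1) = List.replicate k true ++ [false] := by
  induction k with
  | zero => simp [burgeGo]
  | succ k ih =>
    have h := Rset_two k 0 0
    simp only [Multiset.replicate_zero, add_zero, zero_add] at h
    rw [burgeGo, dP_one, ih, h, if_neg]
    · simp [List.replicate_succ]
    · intro h0
      have := congrArg Multiset.card h0
      simp at this

lemma burgeGo_ar (k d : ℕ) (hk : 1 ≤ k) :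
    burgeGo (k + d + 1) (arPart (k + d) k) =
      List.replicate d false ++ List.replicate k true ++ [false] := by
  induction d with
  | zero => simp only [add_zero, arPart_self k hk, burgeGo_ones]; simp
  | succ d ih =>
    rw [show k + (d + 1) = (k + d) + 1 by omega, burgeGo, dP_arPart _ _ hk (by omega), ih,
      if_neg, if_neg (one_notMem_Rset _ _ hk (by omega))]
    · simp [List.replicate_succ]
    · intro h0
      have := arPart_sum_s10 (k + d + 1) k hk
      rw [h0] at this
      simp at this

/-- For `m ≥ k ≥ 1`, `∂^j([m]^k) = [m−j]^k` for all `0 ≤ j ≤ m−k`, and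
the Burge code of the almost rectangular partition `[m]^k` is `α^{m−k} β^k α`.
(`false = α`, `true = β`.) -/
theorem statement10 (m k : ℕ) (hk : 1 ≤ k) (hkm : k ≤ m) :
    (∀ j ≤ m - k, dP^[j] (arPart m k) = arPart (m - j) k) ∧
    burgeCode (arPart m k) =
      List.replicate (m - k) false ++ List.replicate k true ++ [false] := by
  constructor
  · intro j
    induction j with
    | zero => simp
    | succ j ih =>
      intro hj
      rw [Function.iterate_succ_apply', ih (by omega),
        show m - j = (m - (j + 1)) + 1 by omega]
      exact dP_arPart _ _ hk (by omega)
  · have h := burgeGo_ar k (m - k) hk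
    rw [show k + (m - k) = m by omega] at h
    rw [burgeCode, arPart_sum_s10 m k hk, h]
end
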